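/- For symmetric positive definite matrices C₁, C₂ ∈ ℝ^{d×d}, the Gaussian RKHS inclusion 𝓗_{C₁} ⊆ 𝓗_{C₂} holds if and only if C₁² ≥ C₂² in the Loewner order; in that case ‖f‖_{C₂} ≤ (det C₁/det C₂)^{1/2}·‖f‖_{C₁} for all f ∈ 𝓗_{C₁}. -/

import Mathlib

/-!
By Aronszajn's theorem, `𝓗_{C₁} ⊆ 𝓗_{C₂}` with embedding constant `c` means that
`c² k^{C₂} - k^{C₁}` is positive semidefinite. The Gaussian kernel is a Fourier integral,
`k^C(x, y) = det C / (4π)^{d/2} ∫ cos ⟨x - y, v⟩ exp(-vᵀC²v / 4) dv`, so `C₁² ≥ C₂²` orders the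
spectral densities pointwise up to the factor `c² = det C₁ / det C₂`.

Conversely, restrict `c² k^{C₂} - k^{C₁}` to a line `ℝ v`: this gives a positive semidefinite
function of `s - t`. Its Fourier transform against a Gaussian measure is nonnegative, and comparing
the decay rates of its two terms at high frequency yields `vᵀC₁⁻²v ≤ vᵀC₂⁻²v`. Inversion reverses
the Loewner order.
-/

open Matrix

/-- Gaussian kernel on `ℝ^d` with positive definite covariance matrix `C`:
`k^C(x,y) = exp(−(x−y)ᵀ C⁻² (x−y))`. -/
noncomputable def gaussKer {d : ℕ} (C : Matrix (Fin d) (Fin d) ℝ) :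
    (Fin d → ℝ) → (Fin d → ℝ) → ℝ :=
  fun x y => Real.exp (-((x - y) ⬝ᵥ (C⁻¹ ^ 2).mulVec (x - y)))

/-- A reproducing kernel Hilbert space for a kernel `k` on `ℝ^d`: a real Hilbert
space `H` together with an injective linear realization map into functions, feature
vectors `kx` realizing the kernel sections, and the reproducing property. -/
structure RKHSFor (d : ℕ) (k : (Fin d → ℝ) → (Fin d → ℝ) → ℝ) where
  H : Type
  [normedGroup : NormedAddCommGroup H]
  [innerSpace : InnerProductSpace ℝ H]
  [complete : CompleteSpace H]
  toFun : H → (Fin d → ℝ) → ℝ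
  toFun_add : ∀ f g : H, toFun (f + g) = toFun f + toFun g
  toFun_smul : ∀ (c : ℝ) (f : H), toFun (c • f) = c • toFun f
  toFun_injective : Function.Injective toFun
  kx : (Fin d → ℝ) → H
  toFun_kx : ∀ x y, toFun (kx x) y = k x y
  reproducing : ∀ (f : H) (x : Fin d → ℝ),
    @inner ℝ H (InnerProductSpace.toInner) f (kx x) = toFun f x

/-- The Hilbert space norm of an element of an `RKHSFor`. -/
noncomputable def RKHSFor.norm' {d : ℕ} {k : (Fin d → ℝ) → (Fin d → ℝ) → ℝ}
    (R : RKHSFor d k) (f : R.H) : ℝ :=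
  @Norm.norm _ R.normedGroup.toNorm f

attribute [local instance] RKHSFor.normedGroup RKHSFor.innerSpace RKHSFor.complete

namespace RKHSFor

variable {d : ℕ} {k k₁ k₂ : (Fin d → ℝ) → (Fin d → ℝ) → ℝ}

lemma inner_kx_kx (H : RKHSFor d k) (x y : Fin d → ℝ) : inner ℝ (H.kx x) (H.kx y) = k x y := by
  rw [H.reproducing, H.toFun_kx]

lemma isHermitian_kernel (H : RKHSFor d k) : (of k).IsHermitian := by
  ext x y
  simp only [conjTranspose_apply, of_apply, star_trivial, ← H.inner_kx_kx, real_inner_comm]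

lemma norm_linearCombination_kx_sq (H : RKHSFor d k) (a : (Fin d → ℝ) →₀ ℝ) :
    ‖Finsupp.linearCombination ℝ H.kx a‖ ^ 2 =
      a.sum fun x b => a.sum fun y c => b * k x y * c := by
  rw [← real_inner_self_eq_norm_sq, Finsupp.linearCombination_apply, Finsupp.sum_inner]
  refine Finsupp.sum_congr fun x _ => ?_
  rw [Finsupp.inner_sum]
  refine Finsupp.sum_congr fun y _ => ?_
  rw [inner_smul_left, inner_smul_right, H.inner_kx_kx, conj_trivial]
  ring

lemma denseRange_linearCombination_kx (H : RKHSFor d k) :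
    DenseRange (Finsupp.linearCombination ℝ H.kx) := by
  rw [DenseRange, ← LinearMap.coe_range, Submodule.dense_iff_topologicalClosure_eq_top,
    Submodule.topologicalClosure_eq_top_iff, Submodule.eq_bot_iff]
  intro f hf
  refine H.toFun_injective (funext fun x => ?_)
  rw [← H.reproducing, ← H.reproducing, inner_zero_left]
  exact Submodule.inner_left_of_mem_orthogonal
    (LinearMap.mem_range.2
      ⟨Finsupp.single x 1, by rw [Finsupp.linearCombination_single, one_smul]⟩) hf

lemma posSemidef_smul_sub_iff (H₁ : RKHSFor d k₁) (H₂ : RKHSFor d k₂) {c : ℝ} (hc : 0 ≤ c) :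
    (c ^ 2 • of k₂ - of k₁).PosSemidef ↔
      ∀ a, ‖Finsupp.linearCombination ℝ H₁.kx a‖ ≤ c * ‖Finsupp.linearCombination ℝ H₂.kx a‖ := by
  have hherm : (c ^ 2 • of k₂ - of k₁).IsHermitian :=
    (H₂.isHermitian_kernel.smul (IsSelfAdjoint.all _)).sub H₁.isHermitian_kernel
  refine (and_iff_right hherm).trans (forall_congr' fun a => ?_)
  rw [← sq_le_sq₀ (norm_nonneg _) (by positivity), ← sub_nonneg (b := ‖_‖ ^ 2), mul_pow,
    norm_linearCombination_kx_sq, norm_linearCombination_kx_sq]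
  refine iff_of_eq (congrArg ((0 : ℝ) ≤ ·) ?_)
  simp only [Finsupp.sum, Finset.mul_sum, ← Finset.sum_sub_distrib, star_trivial,
    Matrix.sub_apply, Matrix.smul_apply, of_apply, smul_eq_mul]
  exact Finset.sum_congr rfl fun x _ => Finset.sum_congr rfl fun y _ => by ring

lemma exists_continuousLinearMap_of_range_subset (H₁ : RKHSFor d k₁) (H₂ : RKHSFor d k₂)
    (h : Set.range H₁.toFun ⊆ Set.range H₂.toFun) :
    ∃ T : H₁.H →L[ℝ] H₂.H, ∀ f, H₂.toFun (T f) = H₁.toFun f := by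
  choose J hJ using fun f => h (Set.mem_range_self f)
  let L : H₁.H →ₗ[ℝ] H₂.H :=
    { toFun := J
      map_add' f g := H₂.toFun_injective (by rw [H₂.toFun_add, hJ, hJ, hJ, H₁.toFun_add])
      map_smul' c f := H₂.toFun_injective (by
        rw [RingHom.id_apply, H₂.toFun_smul, hJ, hJ, H₁.toFun_smul]) }
  refine ⟨⟨L, L.continuous_of_seq_closed_graph fun u f g hu hg => ?_⟩, hJ⟩
  apply H₂.toFun_injective
  funext x
  have hlim : Filter.Tendsto (fun n => H₁.toFun (u n) x) Filter.atTop (nhds (H₁.toFun f x)) := by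
    simpa only [H₁.reproducing] using hu.inner (𝕜 := ℝ) (tendsto_const_nhds (x := H₁.kx x))
  have hlim' : Filter.Tendsto (fun n => H₂.toFun (L (u n)) x) Filter.atTop
      (nhds (H₂.toFun g x)) := by
    simpa only [H₂.reproducing, Function.comp_apply] using
      hg.inner (𝕜 := ℝ) (tendsto_const_nhds (x := H₂.kx x))
  simp only [show ∀ f, H₂.toFun (L f) = H₁.toFun f from hJ] at hlim' ⊢
  exact tendsto_nhds_unique hlim' hlim

lemma adjoint_kx {H₁ : RKHSFor d k₁} {H₂ : RKHSFor d k₂} {T : H₁.H →L[ℝ] H₂.H}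
    (hT : ∀ f, H₂.toFun (T f) = H₁.toFun f) (x : Fin d → ℝ) :
    T.adjoint (H₂.kx x) = H₁.kx x :=
  ext_inner_left ℝ fun f => by
    rw [ContinuousLinearMap.adjoint_inner_right, H₂.reproducing, H₁.reproducing, hT]

/-- Aronszajn's inclusion theorem, necessity. -/
theorem exists_posSemidef_of_range_subset (H₁ : RKHSFor d k₁) (H₂ : RKHSFor d k₂)
    (h : Set.range H₁.toFun ⊆ Set.range H₂.toFun) :
    ∃ c : ℝ, (c • of k₂ - of k₁).PosSemidef := by
  obtain ⟨T, hT⟩ := exists_continuousLinearMap_of_range_subset H₁ H₂ h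
  refine ⟨‖T.adjoint‖ ^ 2, (posSemidef_smul_sub_iff H₁ H₂ (norm_nonneg _)).2 fun a => ?_⟩
  have hmap : T.adjoint (Finsupp.linearCombination ℝ H₂.kx a) =
      Finsupp.linearCombination ℝ H₁.kx a := by
    rw [← ContinuousLinearMap.coe_coe, Finsupp.apply_linearCombination]
    congr 2
    exact funext (adjoint_kx hT)
  exact hmap ▸ T.adjoint.le_opNorm _

/-- Aronszajn's inclusion theorem, sufficiency. -/
theorem exists_toFun_eq_of_posSemidef (H₁ : RKHSFor d k₁) (H₂ : RKHSFor d k₂) {c : ℝ}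
    (hc : 0 ≤ c) (h : (c ^ 2 • of k₂ - of k₁).PosSemidef) (f : H₁.H) :
    ∃ g : H₂.H, H₂.toFun g = H₁.toFun f ∧ ‖g‖ ≤ c * ‖f‖ := by
  rw [posSemidef_smul_sub_iff H₁ H₂ hc] at h
  have hdense := H₂.denseRange_linearCombination_kx
  set S : H₂.H →L[ℝ] H₁.H := (Finsupp.linearCombination ℝ H₁.kx).extendOfNorm
    (Finsupp.linearCombination ℝ H₂.kx)
  have hS_kx (x : Fin d → ℝ) : S (H₂.kx x) = H₁.kx x := by
    simpa using LinearMap.extendOfNorm_eq hdense ⟨c, h⟩ (Finsupp.single x 1)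
  have hS_norm : ‖S‖ ≤ c :=
    S.opNorm_le_bound hc fun g => LinearMap.norm_extendOfNorm_apply_le hdense c h g
  refine ⟨S.adjoint f, funext fun x => ?_, S.adjoint.le_of_opNorm_le ?_ f⟩
  · rw [← H₂.reproducing, ContinuousLinearMap.adjoint_inner_left, hS_kx, H₁.reproducing]
  · rwa [LinearIsometryEquiv.norm_map]

end RKHSFor

section FourierTransform

open MeasureTheory
open scoped MatrixOrder

section InnerProductSpace

variable {V : Type*} [NormedAddCommGroup V] [InnerProductSpace ℝ V] [FiniteDimensional ℝ V]
  [MeasurableSpace V] [BorelSpace V]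

omit [FiniteDimensional ℝ V] [MeasurableSpace V] [BorelSpace V] in
lemma re_cexp_neg_mul_sq_norm_add (b : ℝ) (w v : V) :
    RCLike.re (Complex.exp (-(b : ℂ) * ‖v‖ ^ 2 + Complex.I * inner ℝ w v)) =
      Real.cos (inner ℝ w v) * Real.exp (-(b * ‖v‖ ^ 2)) := by
  have : (-(b : ℂ) * ‖v‖ ^ 2 + Complex.I * inner ℝ w v) =
      ((-(b * ‖v‖ ^ 2) : ℝ) : ℂ) + (inner ℝ w v : ℝ) * Complex.I := by
    push_cast; ring
  rw [this, Complex.exp_add, ← Complex.ofReal_exp, RCLike.re_to_complex, Complex.re_ofReal_mul,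
    Complex.exp_ofReal_mul_I_re, mul_comm]

lemma integrable_cos_inner_mul_exp_neg_mul_sq_norm {b : ℝ} (hb : 0 < b) (w : V) :
    Integrable fun v : V => Real.cos (inner ℝ w v) * Real.exp (-(b * ‖v‖ ^ 2)) := by
  simpa only [re_cexp_neg_mul_sq_norm_add] using
    (GaussianFourier.integrable_cexp_neg_mul_sq_norm_add (b := b) (by simpa) Complex.I w).re

lemma integral_cos_inner_mul_exp_neg_mul_sq_norm {b : ℝ} (hb : 0 < b) (w : V) :
    ∫ v : V, Real.cos (inner ℝ w v) * Real.exp (-(b * ‖v‖ ^ 2)) =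
      (Real.pi / b) ^ (Module.finrank ℝ V / 2 : ℝ) * Real.exp (-(‖w‖ ^ 2 / (4 * b))) := by
  have hb' : 0 < (b : ℂ).re := by simpa
  have hI := congrArg RCLike.re
    (GaussianFourier.integral_cexp_neg_mul_sq_norm_add hb' Complex.I w)
  rw [← integral_re (GaussianFourier.integrable_cexp_neg_mul_sq_norm_add hb' Complex.I w)] at hI
  simp only [re_cexp_neg_mul_sq_norm_add] at hI
  rw [hI]
  have : ((Real.pi / b : ℂ) ^ (Module.finrank ℝ V / 2 : ℂ) *
      Complex.exp (Complex.I ^ 2 * ‖w‖ ^ 2 / (4 * b))) =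
      (((Real.pi / b) ^ (Module.finrank ℝ V / 2 : ℝ) *
        Real.exp (-(‖w‖ ^ 2 / (4 * b))) : ℝ) : ℂ) := by
    push_cast [Complex.ofReal_cpow (by positivity : 0 ≤ Real.pi / b)]
    rw [Complex.I_sq]
    ring_nf
  rw [this, RCLike.re_to_complex, Complex.ofReal_re]

end InnerProductSpace

section Matrix

variable {ι : Type*} [Fintype ι] [DecidableEq ι] {S : Matrix ι ι ℝ}

lemma exists_eq_transpose_mul_self (hS : S.PosDef) :
    ∃ B : Matrix ι ι ℝ, S = Bᵀ * B ∧ B.det ≠ 0 ∧ |B.det| = √S.det := by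
  obtain ⟨B, rfl⟩ := CStarAlgebra.nonneg_iff_eq_star_mul_self.1 hS.posSemidef.nonneg
  have hdet := hS.det_pos
  rw [star_eq_conjTranspose, conjTranspose_eq_transpose_of_trivial] at *
  rw [det_mul, det_transpose, ← sq] at *
  exact ⟨B, rfl, fun h => by simp [h] at hdet, (Real.sqrt_sq_eq_abs _).symm⟩

lemma measurableEmbedding_toLin' {B : Matrix ι ι ℝ} (hB : B.det ≠ 0) :
    MeasurableEmbedding (toLin' B) :=
  (toLin' B).continuous_of_finiteDimensional.measurableEmbedding
    (mulVec_injective_of_isUnit ((isUnit_iff_isUnit_det B).2 hB.isUnit))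

lemma integrable_comp_mulVec_iff {B : Matrix ι ι ℝ} (hB : B.det ≠ 0) {F : (ι → ℝ) → ℝ} :
    Integrable (fun v => F (B *ᵥ v)) ↔ Integrable F := by
  rw [iff_comm, ← integrable_smul_measure (μ := volume) (c := ENNReal.ofReal |B.det⁻¹|) (by simpa)
    ENNReal.ofReal_ne_top, ← Real.map_matrix_volume_pi_eq_smul_volume_pi hB,
    (measurableEmbedding_toLin' hB).integrable_map_iff]
  simp only [Function.comp_def, toLin'_apply]

lemma integral_comp_mulVec {B : Matrix ι ι ℝ} (hB : B.det ≠ 0) (F : (ι → ℝ) → ℝ) :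
    ∫ v, F (B *ᵥ v) = |B.det|⁻¹ * ∫ v, F v := by
  have := (measurableEmbedding_toLin' hB).integral_map (μ := volume) F
  rw [Real.map_matrix_volume_pi_eq_smul_volume_pi hB, integral_smul_measure,
    ENNReal.toReal_ofReal (abs_nonneg _), abs_inv] at this
  exact this.symm

lemma dotProduct_eq_inner_vecMul_inv {B : Matrix ι ι ℝ} (hB : B.det ≠ 0) (x v : ι → ℝ) :
    x ⬝ᵥ v = inner ℝ (WithLp.toLp 2 (x ᵥ* B⁻¹)) (WithLp.toLp 2 (B *ᵥ v)) := by
  rw [EuclideanSpace.inner_toLp_toLp, star_trivial, dotProduct_comm (B *ᵥ v),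
    dotProduct_mulVec, vecMul_vecMul, nonsing_inv_mul _ hB.isUnit, vecMul_one]

omit [DecidableEq ι] in
lemma dotProduct_transpose_mul_self_mulVec (B : Matrix ι ι ℝ) (v : ι → ℝ) :
    v ⬝ᵥ (Bᵀ * B) *ᵥ v = ‖WithLp.toLp 2 (B *ᵥ v)‖ ^ 2 := by
  rw [← mulVec_mulVec, dotProduct_mulVec, vecMul_transpose, ← real_inner_self_eq_norm_sq,
    EuclideanSpace.inner_toLp_toLp, star_trivial]

omit [DecidableEq ι] in
lemma integrable_cos_dotProduct_mul_exp_neg_mul {b : ℝ} (hb : 0 < b) (hS : S.PosDef) (x : ι → ℝ) :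
    Integrable fun v => Real.cos (x ⬝ᵥ v) * Real.exp (-(b * v ⬝ᵥ S *ᵥ v)) := by
  classical
  obtain ⟨B, rfl, hB, -⟩ := exists_eq_transpose_mul_self hS
  simp only [dotProduct_eq_inner_vecMul_inv hB x, dotProduct_transpose_mul_self_mulVec]
  refine (integrable_comp_mulVec_iff hB (F := fun v => Real.cos (inner ℝ _ (WithLp.toLp 2 v)) *
    Real.exp (-(b * ‖WithLp.toLp 2 v‖ ^ 2)))).2 ?_
  exact (PiLp.volume_preserving_toLp ι).integrable_comp_of_integrable
    (integrable_cos_inner_mul_exp_neg_mul_sq_norm hb _)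

lemma integral_cos_dotProduct_mul_exp_neg_mul {b : ℝ} (hb : 0 < b) (hS : S.PosDef) (x : ι → ℝ) :
    ∫ v, Real.cos (x ⬝ᵥ v) * Real.exp (-(b * v ⬝ᵥ S *ᵥ v)) =
      (√S.det)⁻¹ * ((Real.pi / b) ^ (Fintype.card ι / 2 : ℝ) *
        Real.exp (-(x ⬝ᵥ S⁻¹ *ᵥ x / (4 * b)))) := by
  obtain ⟨B, rfl, hB, hdet⟩ := exists_eq_transpose_mul_self hS
  have hinv : x ⬝ᵥ (Bᵀ * B)⁻¹ *ᵥ x = ‖WithLp.toLp 2 (x ᵥ* B⁻¹)‖ ^ 2 := by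
    rw [← mulVec_transpose, ← dotProduct_transpose_mul_self_mulVec, transpose_transpose,
      transpose_nonsing_inv, Matrix.mul_inv_rev]
  simp only [dotProduct_transpose_mul_self_mulVec, hinv]
  simp only [dotProduct_eq_inner_vecMul_inv hB x]
  rw [integral_comp_mulVec hB (fun v => Real.cos (inner ℝ _ (WithLp.toLp 2 v)) *
      Real.exp (-(b * ‖WithLp.toLp 2 v‖ ^ 2))), hdet,
    (PiLp.volume_preserving_toLp ι).integral_comp (MeasurableEquiv.toLp 2 _).measurableEmbedding
      (fun v => Real.cos (inner ℝ (WithLp.toLp 2 (x ᵥ* B⁻¹)) v) * Real.exp (-(b * ‖v‖ ^ 2))),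
    integral_cos_inner_mul_exp_neg_mul_sq_norm hb, finrank_euclideanSpace]

end Matrix

end FourierTransform

section PosSemidef

open MeasureTheory

lemma posSemidef_cos_sub {X : Type*} (θ : X → ℝ) :
    (of fun x y => Real.cos (θ x - θ y)).PosSemidef := by
  refine ⟨?_, fun a => ?_⟩
  · ext x y
    rw [conjTranspose_apply, of_apply, of_apply, star_trivial, ← Real.cos_neg, neg_sub]
  have hsq : (a.sum fun x b => a.sum fun y c => b * Real.cos (θ x - θ y) * c) =
      (a.sum fun x b => b * Real.cos (θ x)) ^ 2 + (a.sum fun x b => b * Real.sin (θ x)) ^ 2 := by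
    simp only [Finsupp.sum, sq, Finset.sum_mul_sum, ← Finset.sum_add_distrib, Real.cos_sub]
    exact Finset.sum_congr rfl fun x _ => Finset.sum_congr rfl fun y _ => by ring
  simp only [star_trivial, of_apply, hsq]
  positivity

lemma posSemidef_integral {X Ω : Type*} [MeasurableSpace Ω] {μ : Measure Ω}
    {K : Ω → Matrix X X ℝ} (hK : ∀ᵐ ω ∂μ, (K ω).PosSemidef)
    (hint : ∀ x y, Integrable (fun ω => K ω x y) μ) :
    (of fun x y => ∫ ω, K ω x y ∂μ).PosSemidef := by
  refine ⟨?_, fun a => ?_⟩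
  · ext x y
    refine integral_congr_ae (hK.mono fun ω hω => ?_)
    exact hω.isHermitian.apply x y
  · calc 0 ≤ ∫ ω, a.sum fun x b => a.sum fun y c => star b * K ω x y * c ∂μ :=
          integral_nonneg_of_ae (hK.mono fun ω hω => hω.2 a)
      _ = a.sum fun x b => a.sum fun y c => star b * (∫ ω, K ω x y ∂μ) * c := by
          have hterm (x y : X) : Integrable (fun ω => star (a x) * K ω x y * a y) μ :=
            ((hint x y).const_mul _).mul_const _
          simp only [Finsupp.sum]
          rw [integral_finsetSum _ fun x _ => integrable_finsetSum _ fun y _ => hterm x y]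
          refine Finset.sum_congr rfl fun x _ => ?_
          rw [integral_finsetSum _ fun y _ => hterm x y]
          simp only [integral_mul_const, integral_const_mul]

lemma posSemidef_integral_cos_sub_mul {X Ω : Type*} [MeasurableSpace Ω] {μ : Measure Ω}
    {θ : X → Ω → ℝ} {w : Ω → ℝ} (hw : 0 ≤ᵐ[μ] w)
    (hint : ∀ x y, Integrable (fun ω => Real.cos (θ x ω - θ y ω) * w ω) μ) :
    (of fun x y => ∫ ω, Real.cos (θ x ω - θ y ω) * w ω ∂μ).PosSemidef :=
  posSemidef_integral (K := fun ω => of fun x y => Real.cos (θ x ω - θ y ω) * w ω)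
    (hw.mono fun ω hω => by
      convert (posSemidef_cos_sub fun x => θ x ω).smul hω using 1
      ext x y
      exact mul_comm _ _)
    hint

end PosSemidef

section Averaging

open MeasureTheory ProbabilityTheory

variable {X : Type*} [MeasurableSpace X] {μ : Measure X} [IsProbabilityMeasure μ]

omit [IsProbabilityMeasure μ] in
lemma integral_comp_of_measurePreserving {Y : Type*} [MeasurableSpace Y] {ν : Measure Y}
    {g : X → Y} (hg : MeasurePreserving g μ ν) {f : Y → ℝ} (hf : AEStronglyMeasurable f ν) :
    ∫ x, f (g x) ∂μ = ∫ y, f y ∂ν := by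
  rw [← hg.map_eq] at hf ⊢
  exact (integral_map hg.aemeasurable hf).symm

lemma measurePreserving_eval_prodMk_eval {ι : Type*} [Fintype ι] {Ω : ι → Type*}
    [∀ i, MeasurableSpace (Ω i)] (ν : ∀ i, Measure (Ω i)) [∀ i, IsProbabilityMeasure (ν i)]
    {i j : ι} (hij : i ≠ j) :
    MeasurePreserving (fun ω : ∀ i, Ω i => (ω i, ω j)) (Measure.pi ν) ((ν i).prod (ν j)) := by
  have hindep : IndepFun (fun ω : ∀ i, Ω i => ω i) (fun ω => ω j) (Measure.pi ν) :=
    (iIndepFun_pi (X := fun _ => id) fun _ => aemeasurable_id).indepFun hij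
  refine ⟨by fun_prop, ?_⟩
  rw [hindep.map_prod_eq_prod_map_map (measurable_pi_apply i).aemeasurable
      (measurable_pi_apply j).aemeasurable, (measurePreserving_eval _ i).map_eq,
    (measurePreserving_eval _ j).map_eq]

lemma integral_pi_sum_sum_eq {n : ℕ} {K : X → X → ℝ}
    (hint : Integrable (fun p : X × X => K p.1 p.2) (μ.prod μ))
    (hdiag : Integrable (fun x => K x x) μ) :
    ∫ ω : Fin n → X, ∑ i, ∑ j, K (ω i) (ω j) ∂(Measure.pi fun _ => μ) =
      n * ∫ x, K x x ∂μ + n * (n - 1) * ∫ p, K p.1 p.2 ∂(μ.prod μ) := by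
  have hterm (i j : Fin n) : Integrable (fun ω => K (ω i) (ω j)) (Measure.pi fun _ => μ) ∧
      ∫ ω, K (ω i) (ω j) ∂(Measure.pi fun _ => μ) =
        if i = j then ∫ x, K x x ∂μ else ∫ p, K p.1 p.2 ∂(μ.prod μ) := by
    split_ifs with hij
    · subst hij
      have heval := measurePreserving_eval (fun _ => μ) i
      exact ⟨heval.integrable_comp_of_integrable hdiag,
        integral_comp_of_measurePreserving heval hdiag.aestronglyMeasurable⟩
    · have heval := measurePreserving_eval_prodMk_eval (fun _ => μ) hij
      exact ⟨heval.integrable_comp_of_integrable hint,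
        integral_comp_of_measurePreserving heval hint.aestronglyMeasurable⟩
  rw [integral_finsetSum _ fun i _ => integrable_finsetSum _ fun j _ => (hterm i j).1]
  simp only [integral_finsetSum _ fun j _ => (hterm _ j).1, (hterm _ _).2]
  have hrow (i : Fin n) : ∑ j, (if i = j then ∫ x, K x x ∂μ else ∫ p, K p.1 p.2 ∂(μ.prod μ)) =
      ∫ x, K x x ∂μ + (n - 1) * ∫ p, K p.1 p.2 ∂(μ.prod μ) := by
    rw [← Finset.add_sum_erase _ _ (Finset.mem_univ i), if_pos rfl,
      Finset.sum_congr rfl fun j hj => if_neg (Finset.ne_of_mem_erase hj).symm, Finset.sum_const,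
      Finset.card_erase_of_mem (Finset.mem_univ i), Finset.card_fin, nsmul_eq_mul,
      Nat.cast_pred (Fin.pos i)]
  simp only [hrow, Finset.sum_const, Finset.card_fin, nsmul_eq_mul]
  ring

/-- Positivity of `K` at `n + 1` independent samples of `μ` gives `0 ≤ ∫ K x x + n * ∫∫ K x y` after
taking expectations; let `n → ∞`. -/
lemma integral_prod_nonneg_of_posSemidef {K : Matrix X X ℝ} (hK : K.PosSemidef)
    (hint : Integrable (fun p : X × X => K p.1 p.2) (μ.prod μ))
    (hdiag : Integrable (fun x => K x x) μ) :
    0 ≤ ∫ p, K p.1 p.2 ∂(μ.prod μ) := by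
  set D := ∫ x, K x x ∂μ
  set I := ∫ p, K p.1 p.2 ∂(μ.prod μ)
  have hsample (n : ℕ) : 0 ≤ D + n * I := by
    have hsum : 0 ≤ ∫ ω : Fin (n + 1) → X, ∑ i, ∑ j, K (ω i) (ω j) ∂(Measure.pi fun _ => μ) :=
      integral_nonneg fun ω => by
        simpa [dotProduct, mulVec] using (hK.submatrix ω).dotProduct_mulVec_nonneg 1
    rw [integral_pi_sum_sum_eq hint hdiag] at hsum
    push_cast at hsum
    refine nonneg_of_mul_nonneg_right (a := (n + 1 : ℝ)) ?_ (by positivity)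
    linarith
  by_contra! hI
  obtain ⟨n, hn⟩ := exists_nat_gt (D / -I)
  rw [div_lt_iff₀ (neg_pos.2 hI)] at hn
  linarith [hsample n]

end Averaging

section GaussianMeasure

open MeasureTheory ProbabilityTheory
open scoped NNReal

lemma measurePreserving_sub_gaussianReal (m₁ m₂ : ℝ) (v₁ v₂ : ℝ≥0) :
    MeasurePreserving (fun p : ℝ × ℝ => p.1 - p.2)
      ((gaussianReal m₁ v₁).prod (gaussianReal m₂ v₂)) (gaussianReal (m₁ - m₂) (v₁ + v₂)) := by
  have hneg : MeasurePreserving (fun x : ℝ => -x) (gaussianReal m₂ v₂) (gaussianReal (-m₂) v₂) :=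
    ⟨measurable_neg, gaussianReal_map_neg⟩
  have hadd : MeasurePreserving (fun p : ℝ × ℝ => p.1 + p.2)
      ((gaussianReal m₁ v₁).prod (gaussianReal (-m₂) v₂)) (gaussianReal (m₁ + -m₂) (v₁ + v₂)) :=
    ⟨measurable_add, gaussianReal_conv_gaussianReal⟩
  simp only [sub_eq_add_neg]
  exact hadd.comp ((MeasurePreserving.id (gaussianReal m₁ v₁)).prod hneg)

lemma integral_gaussianReal_cos_mul_nonneg {φ : ℝ → ℝ} {v : ℝ≥0}
    (hφ : (of fun s t => φ (s - t)).PosSemidef) (hint : Integrable φ (gaussianReal 0 v)) (ξ : ℝ) :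
    0 ≤ ∫ u, Real.cos (ξ * u) * φ u ∂gaussianReal 0 v := by
  have hpsd : (of fun s t => Real.cos (ξ * (s - t)) * φ (s - t)).PosSemidef := by
    simp only [mul_sub]
    exact (posSemidef_cos_sub (ξ * ·)).hadamard hφ
  have hsub : MeasurePreserving (fun p : ℝ × ℝ => p.1 - p.2)
      ((gaussianReal 0 (v / 2)).prod (gaussianReal 0 (v / 2))) (gaussianReal 0 v) := by
    simpa only [sub_zero, add_halves] using measurePreserving_sub_gaussianReal 0 0 (v / 2) (v / 2)
  have hint' : Integrable (fun u => Real.cos (ξ * u) * φ u) (gaussianReal 0 v) :=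
    hint.bdd_mul (c := 1) (by fun_prop) (.of_forall fun u => Real.abs_cos_le_one _)
  rw [← integral_comp_of_measurePreserving hsub hint'.aestronglyMeasurable]
  exact integral_prod_nonneg_of_posSemidef hpsd (hsub.integrable_comp_of_integrable hint')
    (by simp)

lemma integral_gaussianReal_cos_mul_exp {a : ℝ} (ha : 0 < a + 1 / 2) (ξ : ℝ) :
    ∫ u, Real.cos (ξ * u) * Real.exp (-(a * u ^ 2)) ∂gaussianReal 0 1 =
      (√(2 * Real.pi))⁻¹ *
        (√(Real.pi / (a + 1 / 2)) * Real.exp (-(ξ ^ 2 / (4 * (a + 1 / 2))))) := by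
  have hlebesgue := integral_cos_inner_mul_exp_neg_mul_sq_norm ha ξ
  rw [Module.finrank_self, Nat.cast_one, ← Real.sqrt_eq_rpow] at hlebesgue
  simp only [Real.norm_eq_abs, sq_abs] at hlebesgue
  rw [integral_gaussianReal_eq_integral_smul one_ne_zero, ← hlebesgue, ← integral_const_mul]
  congr with u
  have hexp : Real.exp (-((a + 1 / 2) * u ^ 2)) =
      Real.exp (-u ^ 2 / 2) * Real.exp (-(a * u ^ 2)) := by
    rw [← Real.exp_add]
    ring_nf
  rw [hexp, gaussianPDFReal, NNReal.coe_one, mul_one, mul_one, sub_zero, smul_eq_mul,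
    real_inner_comm, RCLike.inner_apply, conj_trivial]
  ring

lemma le_of_mul_exp_neg_mul_le {A B α β : ℝ} (hA : 0 < A)
    (h : ∀ y, 0 ≤ y → A * Real.exp (-(α * y)) ≤ B * Real.exp (-(β * y))) : β ≤ α := by
  by_contra! hlt
  have hB : 0 < B := hA.trans_le (by simpa using h 0 le_rfl)
  have hgap : 0 < A * (β - α) := mul_pos hA (sub_pos.2 hlt)
  let y := B / (A * (β - α))
  have hy : 0 ≤ y := (div_pos hB hgap).le
  have hexp : A * Real.exp ((β - α) * y) ≤ B := by
    have := mul_le_mul_of_nonneg_right (h y hy) (Real.exp_pos (β * y)).le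
    rw [mul_assoc, mul_assoc, ← Real.exp_add, ← Real.exp_add] at this
    simpa [sub_mul, neg_add_eq_sub] using this
  have hlin : A * ((β - α) * y + 1) ≤ B :=
    (mul_le_mul_of_nonneg_left (Real.add_one_le_exp _) hA.le).trans hexp
  have hy_eq : A * ((β - α) * y) = B := by
    rw [← mul_assoc, mul_div_cancel₀ _ hgap.ne']
  linarith

lemma le_of_posSemidef_exp_neg_mul_sq_sub {a b c : ℝ} (ha : 0 ≤ a) (hb : 0 ≤ b)
    (h : (of fun s t : ℝ => c * Real.exp (-(b * (s - t) ^ 2)) -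
      Real.exp (-(a * (s - t) ^ 2))).PosSemidef) : a ≤ b := by
  have hint {r : ℝ} (hr : 0 ≤ r) :
      Integrable (fun u => Real.exp (-(r * u ^ 2))) (gaussianReal 0 1) :=
    .of_bound (by fun_prop) 1 (.of_forall fun u => by simpa using by positivity)
  have hcos {r : ℝ} (hr : 0 ≤ r) (ξ : ℝ) :
      Integrable (fun u => Real.cos (ξ * u) * Real.exp (-(r * u ^ 2))) (gaussianReal 0 1) :=
    (hint hr).bdd_mul (c := 1) (by fun_prop) (.of_forall fun u => Real.abs_cos_le_one _)
  have hfourier (ξ : ℝ) : √(Real.pi / (a + 1 / 2)) * Real.exp (-(ξ ^ 2 / (4 * (a + 1 / 2)))) ≤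
      c * (√(Real.pi / (b + 1 / 2)) * Real.exp (-(ξ ^ 2 / (4 * (b + 1 / 2))))) := by
    have := integral_gaussianReal_cos_mul_nonneg
      (φ := fun u => c * Real.exp (-(b * u ^ 2)) - Real.exp (-(a * u ^ 2))) h
      (((hint hb).const_mul c).sub (hint ha)) ξ
    simp only [mul_sub, mul_left_comm _ c] at this
    rw [integral_sub ((hcos hb ξ).const_mul c) (hcos ha ξ), integral_const_mul,
      integral_gaussianReal_cos_mul_exp (by positivity),
      integral_gaussianReal_cos_mul_exp (by positivity), mul_left_comm c, ← mul_sub] at this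
    exact sub_nonneg.1 (nonneg_of_mul_nonneg_right this (by positivity))
  have hrate : (4 * (b + 1 / 2))⁻¹ ≤ (4 * (a + 1 / 2))⁻¹ := by
    refine le_of_mul_exp_neg_mul_le (A := √(Real.pi / (a + 1 / 2)))
      (B := c * √(Real.pi / (b + 1 / 2))) (by positivity) fun y hy => ?_
    simpa only [Real.sq_sqrt hy, div_eq_inv_mul, mul_assoc] using hfourier √y
  rw [inv_le_inv₀ (by positivity) (by positivity)] at hrate
  linarith

end GaussianMeasure

section LoewnerOrder

open scoped ComplexOrder

variable {n 𝕜 : Type*} [Fintype n] [DecidableEq n] [RCLike 𝕜]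

lemma posDef_pow {S : Matrix n n 𝕜} (hS : S.PosDef) (k : ℕ) : (S ^ k).PosDef :=
  (hS.posSemidef.pow k).posDef_iff_isUnit.2 (hS.isUnit.pow k)

/-- Both sides are Schur complements in the block matrix `[T, 1; 1, S⁻¹]`. -/
lemma posSemidef_sub_iff_inv_sub_inv {S T : Matrix n n 𝕜} (hS : S.PosDef) (hT : T.PosDef) :
    (T - S).PosSemidef ↔ (S⁻¹ - T⁻¹).PosSemidef := by
  have := hS.isUnit.invertible
  have := hT.isUnit.invertible
  have := hS.inv.isUnit.invertible
  have h₁ := PosDef.fromBlocks₁₁ 1 S⁻¹ hT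
  have h₂ := PosDef.fromBlocks₂₂ T 1 hS.inv
  simp only [conjTranspose_one, Matrix.one_mul, Matrix.mul_one, inv_inv_of_invertible] at h₁ h₂
  exact h₂.symm.trans h₁

end LoewnerOrder

section GaussianKernel

open MeasureTheory

variable {d : ℕ} {C C₁ C₂ : Matrix (Fin d) (Fin d) ℝ}

/-- The spectral density of `gaussKer C` up to the factor `C.det / (4 * π) ^ (d / 2)`: the Gaussian
kernel is the Fourier transform of this weight. Leaving the factor out makes the weight antitone
in `C ^ 2`. -/
noncomputable def gaussWeight (C : Matrix (Fin d) (Fin d) ℝ) (v : Fin d → ℝ) : ℝ :=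
  Real.exp (-(1 / 4 * v ⬝ᵥ (C ^ 2) *ᵥ v))

lemma gaussWeight_le_gaussWeight (h : (C₁ ^ 2 - C₂ ^ 2).PosSemidef) (v : Fin d → ℝ) :
    gaussWeight C₁ v ≤ gaussWeight C₂ v := by
  have := h.dotProduct_mulVec_nonneg v
  rw [star_trivial, sub_mulVec, dotProduct_sub, sub_nonneg] at this
  unfold gaussWeight
  gcongr

lemma integrable_cos_sub_mul_gaussWeight (hC : C.PosDef) (x y : Fin d → ℝ) :
    Integrable fun v => Real.cos (x ⬝ᵥ v - y ⬝ᵥ v) * gaussWeight C v := by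
  simpa only [sub_dotProduct, gaussWeight] using
    integrable_cos_dotProduct_mul_exp_neg_mul (by norm_num) (posDef_pow hC 2) (x - y)

lemma gaussKer_eq_integral (hC : C.PosDef) (x y : Fin d → ℝ) :
    gaussKer C x y = C.det / (4 * Real.pi) ^ (d / 2 : ℝ) *
      ∫ v, Real.cos (x ⬝ᵥ v - y ⬝ᵥ v) * gaussWeight C v := by
  have hdet := hC.det_pos
  simp only [← sub_dotProduct, gaussWeight]
  rw [integral_cos_dotProduct_mul_exp_neg_mul (by norm_num) (posDef_pow hC 2), det_pow,
    Real.sqrt_sq hdet.le, ← inv_pow', Fintype.card_fin, gaussKer,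
    show Real.pi / (1 / 4) = 4 * Real.pi by ring, show (4 * (1 / 4) : ℝ) = 1 by norm_num, div_one]
  field_simp

lemma posSemidef_smul_gaussKer_sub (h₁ : C₁.PosDef) (h₂ : C₂.PosDef)
    (h : (C₁ ^ 2 - C₂ ^ 2).PosSemidef) :
    ((C₁.det / C₂.det) • of (gaussKer C₂) - of (gaussKer C₁)).PosSemidef := by
  have hdet₁ := h₁.det_pos
  have hdet₂ := h₂.det_pos
  have hint₁ := integrable_cos_sub_mul_gaussWeight h₁
  have hint₂ := integrable_cos_sub_mul_gaussWeight h₂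
  have hint_sub (x y : Fin d → ℝ) :
      Integrable fun v => Real.cos (x ⬝ᵥ v - y ⬝ᵥ v) * (gaussWeight C₂ v - gaussWeight C₁ v) := by
    simp only [mul_sub]
    exact (hint₂ x y).sub (hint₁ x y)
  have hpsd := posSemidef_integral_cos_sub_mul
    (.of_forall fun v => sub_nonneg.2 (gaussWeight_le_gaussWeight h v)) hint_sub
  convert hpsd.smul (a := C₁.det / (4 * Real.pi) ^ (d / 2 : ℝ)) (by positivity) using 1
  ext x y
  simp only [Matrix.sub_apply, Matrix.smul_apply, of_apply, smul_eq_mul, mul_sub]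
  rw [integral_sub (hint₂ x y) (hint₁ x y), gaussKer_eq_integral h₁, gaussKer_eq_integral h₂]
  field_simp

lemma gaussKer_smul_smul (C : Matrix (Fin d) (Fin d) ℝ) (v : Fin d → ℝ) (s t : ℝ) :
    gaussKer C (s • v) (t • v) = Real.exp (-(v ⬝ᵥ (C⁻¹ ^ 2) *ᵥ v * (s - t) ^ 2)) := by
  rw [gaussKer, ← sub_smul, mulVec_smul, smul_dotProduct, dotProduct_smul, smul_eq_mul,
    smul_eq_mul]
  ring_nf

lemma posSemidef_sq_sub_sq_of_posSemidef_smul_gaussKer_sub (h₁ : C₁.PosDef) (h₂ : C₂.PosDef)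
    {c : ℝ} (h : (c • of (gaussKer C₂) - of (gaussKer C₁)).PosSemidef) :
    (C₁ ^ 2 - C₂ ^ 2).PosSemidef := by
  rw [posSemidef_sub_iff_inv_sub_inv (posDef_pow h₂ 2) (posDef_pow h₁ 2), ← inv_pow', ← inv_pow']
  have hP₁ := posDef_pow h₁.inv 2
  have hP₂ := posDef_pow h₂.inv 2
  refine .of_dotProduct_mulVec_nonneg (hP₂.isHermitian.sub hP₁.isHermitian) fun v => ?_
  rw [star_trivial, sub_mulVec, dotProduct_sub, sub_nonneg]
  refine le_of_posSemidef_exp_neg_mul_sq_sub (c := c)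
    (hP₁.posSemidef.dotProduct_mulVec_nonneg v) (hP₂.posSemidef.dotProduct_mulVec_nonneg v) ?_
  convert h.submatrix (fun s : ℝ => s • v) using 1
  ext s t
  simp [gaussKer_smul_smul]

end GaussianKernel

theorem gaussian_RKHS_inclusion_iff {d : ℕ} (C₁ C₂ : Matrix (Fin d) (Fin d) ℝ)
    (hC₁ : C₁.PosDef) (hC₂ : C₂.PosDef)
    (H₁ : RKHSFor d (gaussKer C₁)) (H₂ : RKHSFor d (gaussKer C₂)) :
    (Set.range H₁.toFun ⊆ Set.range H₂.toFun ↔ (C₁ ^ 2 - C₂ ^ 2).PosSemidef) ∧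
    ((C₁ ^ 2 - C₂ ^ 2).PosSemidef → ∀ f : H₁.H, ∃ g : H₂.H,
      H₂.toFun g = H₁.toFun f ∧
      H₂.norm' g ≤ Real.sqrt (C₁.det / C₂.det) * H₁.norm' f) := by
  have hbound (h : (C₁ ^ 2 - C₂ ^ 2).PosSemidef) (f : H₁.H) :
      ∃ g : H₂.H, H₂.toFun g = H₁.toFun f ∧ ‖g‖ ≤ √(C₁.det / C₂.det) * ‖f‖ := by
    refine H₁.exists_toFun_eq_of_posSemidef H₂ (Real.sqrt_nonneg _) ?_ f
    rw [Real.sq_sqrt (div_nonneg hC₁.det_pos.le hC₂.det_pos.le)]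
    exact posSemidef_smul_gaussKer_sub hC₁ hC₂ h
  refine ⟨⟨fun hsub => ?_, fun h => ?_⟩, hbound⟩
  · obtain ⟨c, hc⟩ := H₁.exists_posSemidef_of_range_subset H₂ hsub
    exact posSemidef_sq_sub_sq_of_posSemidef_smul_gaussKer_sub hC₁ hC₂ hc
  · rintro _ ⟨f, rfl⟩
    obtain ⟨g, hg, -⟩ := hbound h f
    exact ⟨g, hg⟩
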